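/- (Rank version of stability.) Let N be a nonempty matroid with χ(N) ≥ 2. For all ε > 0 there exist δ > 0 and r₀ such that the following holds: if M ⊆ 𝔽₂ⁿ \ {0} is an N-free matroid of rank r ≥ r₀ with |M| ≥ (1 − 2^{1−χ(N)} − δ)·2ʳ, then there is an r-dimensional subspace U of 𝔽₂ⁿ containing M and a subspace W ⊆ U with dim W = r − χ(N) + 1 such that, setting B = (U \ {0}) \ W (a copy of BB(r−1, 2, χ(N)−1)), we have |M Δ B| < ε·2ʳ. -/

import Mathlib

open scoped Classical

/-- `M` has an `N`-restriction: some injective linear image of `N` lies inside `M`. -/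
def HasRestriction {α β : Type*} [AddCommMonoid α] [AddCommMonoid β]
    [Module (ZMod 2) α] [Module (ZMod 2) β] (N : Set α) (M : Set β) : Prop :=
  ∃ ψ : α →ₗ[ZMod 2] β, Function.Injective ψ ∧ ψ '' N ⊆ M

/-- The set of distinct `N`-restrictions of `M` (as subsets of `M`). -/
def restrictionSet {α β : Type*} [AddCommMonoid α] [AddCommMonoid β]
    [Module (ZMod 2) α] [Module (ZMod 2) β] (N : Set α) (M : Set β) : Set (Set β) :=
  {S | S ⊆ M ∧ ∃ ψ : α →ₗ[ZMod 2] β, Function.Injective ψ ∧ S = ψ '' N}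

/-- The Turán number for a single excluded matroid `N`. -/
noncomputable def exNum {α : Type*} [AddCommMonoid α] [Module (ZMod 2) α] (N : Set α) (n : ℕ) : ℕ :=
  sSup {m | ∃ M : Set (Fin n → ZMod 2), 0 ∉ M ∧ ¬ HasRestriction N M ∧ M.ncard = m}

/-- The Turán number for a family of excluded matroids. -/
noncomputable def exNumFam (𝒩 : Set (Σ k : ℕ, Set (Fin k → ZMod 2))) (n : ℕ) : ℕ :=
  sSup {m | ∃ M : Set (Fin n → ZMod 2), 0 ∉ M ∧
    (∀ N ∈ 𝒩, ¬ HasRestriction N.2 M) ∧ M.ncard = m}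

/-- The critical number of `M ⊆ 𝔽₂ⁿ`. -/
noncomputable def critNum {n : ℕ} (M : Set (Fin n → ZMod 2)) : ℕ :=
  sInf {c | ∃ φ : (Fin n → ZMod 2) →ₗ[ZMod 2] (Fin c → ZMod 2), ∀ x ∈ M, φ x ≠ 0}

/-- The rank of `M`: dimension of its span. -/
noncomputable def rankM {n : ℕ} (M : Set (Fin n → ZMod 2)) : ℕ :=
  Module.finrank (ZMod 2) (Submodule.span (ZMod 2) M)

/-- `M` is a copy of `N^{n,t}`. -/
def IsCopyNnt {d : ℕ} (N : Set (Fin d → ZMod 2)) (n t : ℕ)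
    (M : Set (Fin n → ZMod 2)) : Prop :=
  ∃ F : Submodule (ZMod 2) (Fin n → ZMod 2), Module.finrank (ZMod 2) F = n - t ∧
    ∃ θ : (Fin d → ZMod 2) →ₗ[ZMod 2] (Fin n → ZMod 2),
      Function.Injective θ ∧ (∀ x, θ x ∈ F) ∧ M = θ '' N ∪ {x | x ∉ F}

/-- The decomposition family `𝒟(𝒩)`. -/
def decompFam (𝒩 : Set (Σ k : ℕ, Set (Fin k → ZMod 2))) (k : ℕ) :
    Set (Σ k : ℕ, Set (Fin k → ZMod 2)) :=
  {D | 0 ∉ D.2 ∧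
    (∃ N ∈ 𝒩, ∃ M : Set (Fin N.1 → ZMod 2), IsCopyNnt D.2 N.1 k M ∧ HasRestriction N.2 M) ∧
    ∀ D' : Σ k : ℕ, Set (Fin k → ZMod 2), 0 ∉ D'.2 →
      (∃ N ∈ 𝒩, ∃ M : Set (Fin N.1 → ZMod 2), IsCopyNnt D'.2 N.1 k M ∧ HasRestriction N.2 M) →
      HasRestriction D'.2 D.2 → HasRestriction D.2 D'.2}

/-- The cycle matroid of a simple graph. -/
def cycleMatroid {V : Type*} [DecidableEq V] (G : SimpleGraph V) : Set (V → ZMod 2) :=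
  {x | ∃ u v, G.Adj u v ∧ x = Pi.single u 1 + Pi.single v 1}

/-!
Call a pair of subspaces `X`, `D` with `x + d ∈ M` for all nonzero `x ∈ X` and all `d ∈ D` a blow-up
of the geometry `X` in `M`. If `χ(N) = j + 1` and `dim N = k`, then `N` embeds into the blow-up of a
`(j + 1)`-dimensional `X` by a `k`-dimensional `D`, so `M` contains no such blow-up. A dense set
contains translates of subspaces, hence `M` contains a blow-up of a `j`-dimensional `X` by a large
`D`, and the vectors `z` with `z + X ⊆ M` are rare. As `2ʲ |Mᶜ|` is only slightly larger than `2ʳ`,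
the translates of `Mᶜ` by the elements of `X` must then be almost disjoint. The same holds for every
shear of `X` along `D`, which forces `M` to be almost invariant under `D`.

So `M` is close to the union of the cosets of `D` inside `M`. This union contains no
`(j + 1)`-dimensional geometry, and the stability version of the Bose–Burton theorem shows that it
is disjoint from a subspace of codimension `j`; there the case of sum-free sets is Andrásfai's
pentagon argument.
-/

open Finset Module

section Cores

variable {V : Type*} [AddCommGroup V] [Module (ZMod 2) V] {M : Finset V}
  {X Y : Submodule (ZMod 2) V} {x w z : V}

/-- The union of the cosets of `X` that are contained in `M`. -/
noncomputable def cosetCore (M : Finset V) (X : Submodule (ZMod 2) V) : Finset V :=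
  {z ∈ M | ∀ x ∈ X, z + x ∈ M}

/-- The nonzero vectors of `X` belong to `M`: they form a projective geometry restriction of `M`.
If `IsGeometryIn X (cosetCore M D)` and `0 ∉ M`, then `X` and `D` are independent and
`(X + D) \ D`, a Bose–Burton geometry, is contained in `M`. -/
def IsGeometryIn (X : Submodule (ZMod 2) V) (M : Finset V) : Prop :=
  ∀ x ∈ X, x ≠ 0 → x ∈ M

theorem mem_cosetCore : z ∈ cosetCore M X ↔ ∀ x ∈ X, z + x ∈ M := by
  simp only [cosetCore, mem_filter, and_iff_right_iff_imp]
  exact fun h => by simpa only [add_zero] using h 0 X.zero_mem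

theorem cosetCore_subset : cosetCore M X ⊆ M := filter_subset _ _

theorem cosetCore_subset_cosetCore (h : X ≤ Y) : cosetCore M Y ⊆ cosetCore M X :=
  fun _ hz => mem_cosetCore.2 fun x hx => mem_cosetCore.1 hz x (h hx)

theorem cosetCore_sup : cosetCore M (X ⊔ Y) = cosetCore (cosetCore M X) Y := by
  ext z
  simp only [mem_cosetCore]
  constructor
  · intro h y hy x hx
    rw [add_assoc, add_comm y]
    exact h _ (Submodule.add_mem_sup hx hy)
  · rintro h _ hxy
    obtain ⟨x, hx, y, hy, rfl⟩ := Submodule.mem_sup.1 hxy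
    rw [add_comm x, ← add_assoc]
    exact h y hy x hx

theorem cosetCore_bot : cosetCore M (⊥ : Submodule (ZMod 2) V) = M := by
  ext z
  simp only [mem_cosetCore, Submodule.mem_bot, forall_eq, add_zero]

theorem eq_zero_or_eq_of_mem_span_singleton (h : x ∈ Submodule.span (ZMod 2) {w}) :
    x = 0 ∨ x = w := by
  obtain ⟨a, rfl⟩ := Submodule.mem_span_singleton.1 h
  fin_cases a
  · exact Or.inl (zero_smul _ w)
  · exact Or.inr (one_smul _ w)

theorem cosetCore_span_singleton :
    cosetCore M (Submodule.span (ZMod 2) {w}) = {z ∈ M | z + w ∈ M} := by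
  ext z
  rw [mem_filter]
  refine ⟨fun h => ⟨cosetCore_subset h, mem_cosetCore.1 h w (Submodule.mem_span_singleton_self w)⟩,
    fun h => mem_cosetCore.2 fun x hx => ?_⟩
  rcases eq_zero_or_eq_of_mem_span_singleton hx with rfl | rfl
  · simpa only [add_zero] using h.1
  · exact h.2

theorem add_mem_cosetCore (hz : z ∈ cosetCore M X) (hx : x ∈ X) : z + x ∈ cosetCore M X :=
  mem_cosetCore.2 fun y hy => by
    rw [add_assoc]
    exact mem_cosetCore.1 hz _ (X.add_mem hx hy)

theorem notMem_of_mem_cosetCore (h0 : 0 ∉ M) (hz : z ∈ cosetCore M X) : z ∉ X :=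
  fun hzX => h0 (ZModModule.add_self z ▸ mem_cosetCore.1 hz z hzX)

theorem isGeometryIn_bot : IsGeometryIn ⊥ M :=
  fun _ hx hx0 => absurd ((Submodule.mem_bot _).1 hx) hx0

theorem IsGeometryIn.mono {M' : Finset V} (hX : IsGeometryIn X M) (h : M ⊆ M') :
    IsGeometryIn X M' :=
  fun x hx hx0 => h (hX x hx hx0)

theorem IsGeometryIn.map_subtype {H : Submodule (ZMod 2) V} {X : Submodule (ZMod 2) H}
    (hX : IsGeometryIn X (M.subtype (· ∈ H))) : IsGeometryIn (X.map H.subtype) M := by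
  rintro _ ⟨x, hx, rfl⟩ hx0
  exact mem_subtype.1 (hX x hx fun h => hx0 (h ▸ rfl))

theorem IsGeometryIn.sup_span_singleton (hX : IsGeometryIn X M) (hz : z ∈ cosetCore M X) :
    IsGeometryIn (X ⊔ Submodule.span (ZMod 2) {z}) M := by
  intro _ h h0
  obtain ⟨x, hx, y, hy, rfl⟩ := Submodule.mem_sup.1 h
  rcases eq_zero_or_eq_of_mem_span_singleton hy with rfl | rfl
  · rw [add_zero] at h0 ⊢
    exact hX x hx h0
  · rw [add_comm]
    exact mem_cosetCore.1 hz x hx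

theorem finrank_sup_span_singleton_of_mem_cosetCore [Module.Finite (ZMod 2) V] (h0 : 0 ∉ M)
    (hz : z ∈ cosetCore M X) :
    finrank (ZMod 2) ↥(X ⊔ Submodule.span (ZMod 2) {z}) = finrank (ZMod 2) X + 1 :=
  Submodule.finrank_sup_span_singleton (notMem_of_mem_cosetCore h0 hz)

/-- Otherwise `X`, `x` and `y` would span a geometry with two more dimensions than `X`. -/
theorem IsGeometryIn.add_notMem_cosetCore [Module.Finite (ZMod 2) V] (h0 : 0 ∉ M)
    (hX : IsGeometryIn X M)
    (hfree : ∀ Y : Submodule (ZMod 2) V, finrank (ZMod 2) Y = finrank (ZMod 2) X + 2 →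
      ¬ IsGeometryIn Y M) {y : V} (hx : x ∈ cosetCore M X) (hy : y ∈ cosetCore M X) :
    x + y ∉ cosetCore M X := by
  intro hxy
  have hy' : y ∈ cosetCore M (X ⊔ Submodule.span (ZMod 2) {x}) := by
    rw [cosetCore_sup, cosetCore_span_singleton, mem_filter, add_comm y]
    exact ⟨hy, hxy⟩
  refine hfree _ ?_ ((hX.sup_span_singleton hx).sup_span_singleton hy')
  rw [finrank_sup_span_singleton_of_mem_cosetCore h0 hy',
    finrank_sup_span_singleton_of_mem_cosetCore h0 hx]

end Cores

section Counting

theorem card_filter_add_right_mem {G : Type*} [AddGroup G] [Fintype G] [DecidableEq G]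
    (M : Finset G) (a : G) : #{z | z + a ∈ M} = #M :=
  card_equiv (Equiv.addRight a) fun z => by simp only [mem_filter_univ, Equiv.coe_addRight]

theorem card_filter_add_left_mem {G : Type*} [AddGroup G] [Fintype G] [DecidableEq G]
    (M : Finset G) (a : G) : #{z | a + z ∈ M} = #M :=
  card_equiv (Equiv.addLeft a) fun z => by simp only [mem_filter_univ, Equiv.coe_addLeft]

theorem sum_card_filter_add_mem {G : Type*} [AddGroup G] [Fintype G] [DecidableEq G]
    (B : Finset G) : ∑ w, #{z ∈ B | z + w ∈ B} = #B ^ 2 := by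
  simp only [card_filter]
  rw [sum_comm]
  simp only [← card_filter, card_filter_add_left_mem, sum_const, smul_eq_mul, sq]

theorem exists_le_finrank_eq {K E : Type*} [DivisionRing K] [AddCommGroup E] [Module K E]
    {D : Submodule K E} {k : ℕ} (h : k ≤ finrank K D) : ∃ W ≤ D, finrank K W = k := by
  obtain ⟨f, hf⟩ := exists_linearIndependent_of_le_finrank h
  refine ⟨(Submodule.span K (Set.range f)).map D.subtype, Submodule.map_subtype_le D _, ?_⟩
  rw [Submodule.finrank_map_subtype_eq, finrank_span_eq_card hf, Fintype.card_fin]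

variable {V : Type*} [AddCommGroup V] [Module (ZMod 2) V] [Fintype V]

theorem card_eq_two_pow_finrank : Fintype.card V = 2 ^ finrank (ZMod 2) V := by
  rw [Module.card_eq_pow_finrank (K := ZMod 2), ZMod.card]

theorem card_filter_mem_submodule (X : Submodule (ZMod 2) V) :
    #{z | z ∈ X} = 2 ^ finrank (ZMod 2) X := by
  rw [← card_eq_two_pow_finrank, Fintype.card_subtype]

variable [DecidableEq V] {M : Finset V}

/-- Count the pairs `(z, y)` with `y ∈ Y` and `z + y ∉ M`: every `z ∉ cosetCore M Y` is in at least
one such pair, and the vectors in the first set are in at least two. -/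
theorem card_filter_exists_add_notMem_add_card_compl_cosetCore_le (M : Finset V)
    (Y : Submodule (ZMod 2) V) :
    #{z ∈ Mᶜ | ∃ y ∈ Y, y ≠ 0 ∧ z + y ∉ M} + #(cosetCore M Y)ᶜ ≤ 2 ^ finrank (ZMod 2) Y * #Mᶜ := by
  have hpoint (z : V) : (if z ∈ Mᶜ ∧ ∃ y ∈ Y, y ≠ 0 ∧ z + y ∉ M then 1 else 0) +
      (if z ∈ (cosetCore M Y)ᶜ then 1 else 0) ≤ #{y | y ∈ Y ∧ z + y ∈ Mᶜ} := by
    split_ifs with h₂ h₁ h₁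
    · obtain ⟨hz, y, hy, hy0, hzy⟩ := h₂
      refine one_lt_card.2 ⟨0, ?_, y, ?_, hy0.symm⟩
      · exact mem_filter_univ _ |>.2 ⟨Y.zero_mem, by rwa [add_zero]⟩
      · exact mem_filter_univ _ |>.2 ⟨hy, mem_compl.2 hzy⟩
    · obtain ⟨hz, -⟩ := h₂
      exact absurd (cosetCore_subset (by rwa [mem_compl, not_not] at h₁)) (mem_compl.1 hz)
    · rw [mem_compl, mem_cosetCore] at h₁
      push Not at h₁
      obtain ⟨y, hy, hzy⟩ := h₁
      exact card_pos.2 ⟨y, mem_filter_univ _ |>.2 ⟨hy, mem_compl.2 hzy⟩⟩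
    · exact Nat.zero_le _
  have hsum := sum_le_sum fun z (_ : z ∈ univ) => hpoint z
  have hcount : ∑ z, #{y | y ∈ Y ∧ z + y ∈ Mᶜ} = 2 ^ finrank (ZMod 2) Y * #Mᶜ := by
    simp only [← filter_filter, card_filter _ (filter _ _)]
    rw [sum_comm]
    simp only [← card_filter, card_filter_add_right_mem, sum_const, card_filter_mem_submodule,
      smul_eq_mul]
  rwa [sum_add_distrib, ← card_filter, ← card_filter, hcount, ← filter_filter, filter_univ_mem,
    filter_univ_mem] at hsum

theorem card_compl_cosetCore_le (M : Finset V) (X : Submodule (ZMod 2) V) :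
    #(cosetCore M X)ᶜ ≤ 2 ^ finrank (ZMod 2) X * #Mᶜ :=
  (Nat.le_add_left _ _).trans (card_filter_exists_add_notMem_add_card_compl_cosetCore_le M X)

theorem exists_isGeometryIn_of_card_compl_lt (h0 : 0 ∉ M) (j : ℕ)
    (hM : 2 ^ j * #Mᶜ < Fintype.card V) :
    ∃ X : Submodule (ZMod 2) V, finrank (ZMod 2) X = j ∧ IsGeometryIn X M := by
  induction j with
  | zero => exact ⟨⊥, finrank_bot _ _, isGeometryIn_bot⟩
  | succ j ih =>
    have hj : 2 ^ j * #Mᶜ < Fintype.card V :=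
      lt_of_le_of_lt (Nat.mul_le_mul_right _ (Nat.pow_le_pow_right two_pos j.le_succ)) hM
    obtain ⟨X, hXj, hX⟩ := ih hj
    have hcore : #(cosetCore M X)ᶜ < Fintype.card V :=
      (card_compl_cosetCore_le M X).trans_lt (hXj ▸ hj)
    obtain ⟨z, hz⟩ : (cosetCore M X).Nonempty := by
      rwa [card_compl_lt_iff_nonempty] at hcore
    exact ⟨_, by rw [finrank_sup_span_singleton_of_mem_cosetCore h0 hz, hXj],
      hX.sup_span_singleton hz⟩

end Counting

section SumFree

variable {V : Type*} [AddCommGroup V] [Module (ZMod 2) V] [Fintype V] {M : Finset V}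

/-- If `a + b + c + d` were not a sum of two elements of `M`, the translates of `M` by the partial
sums of `a, b, c, d` would form a pentagon whose consecutive members are disjoint, so every point
would lie in at most two of them. -/
theorem exists_add_eq_of_sumFree (hfree : ∀ x ∈ M, ∀ y ∈ M, x + y ∉ M)
    (hM : 2 * Fintype.card V < 5 * #M) {a b c d : V} (ha : a ∈ M) (hb : b ∈ M) (hc : c ∈ M)
    (hd : d ∈ M) : ∃ x ∈ M, ∃ y ∈ M, x + y = a + b + c + d := by
  by_contra! hne
  have hpoint (z : V) : (if z + 0 ∈ M then 1 else 0) + (if z + a ∈ M then 1 else 0) +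
      (if z + (a + b) ∈ M then 1 else 0) + (if z + (a + b + c) ∈ M then 1 else 0) +
      (if z + (a + b + c + d) ∈ M then 1 else 0) ≤ 2 := by
    have hpair {s t : V} (h : z + s ∈ M → z + t ∉ M) :
        (if z + s ∈ M then 1 else 0) + (if z + t ∈ M then 1 else 0) ≤ 1 := by
      by_cases hs : z + s ∈ M
      · simp only [hs, h hs, if_true, if_false, le_refl]
      · split_ifs <;> norm_num
    have h01 := hpair (s := 0) (t := a) fun h => by simpa only [add_zero] using hfree _ h a ha
    have h12 := hpair (s := a) (t := a + b) fun h => by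
      simpa only [add_assoc] using hfree _ h b hb
    have h23 := hpair (s := a + b) (t := a + b + c) fun h => by
      simpa only [add_assoc] using hfree _ h c hc
    have h34 := hpair (s := a + b + c) (t := a + b + c + d) fun h => by
      simpa only [add_assoc] using hfree _ h d hd
    have h40 := hpair (s := 0) (t := a + b + c + d) fun h0 h4 => hne _ h0 _ h4 <| by
      rw [add_zero, ← add_assoc, ZModModule.add_self, zero_add]
    omega
  have hsum := sum_le_sum fun z (_ : z ∈ univ) => hpoint z
  simp only [sum_add_distrib, ← card_filter, card_filter_add_right_mem, sum_const, card_univ,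
    smul_eq_mul] at hsum
  omega

theorem exists_hyperplane_disjoint_of_sumFree (hfree : ∀ x ∈ M, ∀ y ∈ M, x + y ∉ M)
    (hM : 2 * Fintype.card V < 5 * #M) :
    ∃ H : Submodule (ZMod 2) V, finrank (ZMod 2) H + 1 = finrank (ZMod 2) V ∧ ∀ x ∈ H, x ∉ M := by
  obtain ⟨a, ha⟩ : M.Nonempty := card_pos.1 (by omega)
  let G : AddSubgroup V :=
    { carrier := {v | ∃ x ∈ M, ∃ y ∈ M, x + y = v}
      zero_mem' := ⟨a, ha, a, ha, ZModModule.add_self a⟩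
      add_mem' := by
        rintro _ _ ⟨x, hx, y, hy, rfl⟩ ⟨x', hx', y', hy', rfl⟩
        rw [← add_assoc]
        exact exists_add_eq_of_sumFree hfree hM hx hy hx' hy'
      neg_mem' := fun h => by rwa [ZModModule.neg_eq_self] }
  let H : Submodule (ZMod 2) V := AddSubgroup.toZModSubmodule 2 G
  have hdisj : ∀ v ∈ H, v ∉ M := by
    rintro _ ⟨x, hx, y, hy, rfl⟩
    exact hfree x hx y hy
  refine ⟨H, le_antisymm ?_ ?_, hdisj⟩
  · exact Submodule.finrank_lt fun htop => hdisj a (htop ▸ Submodule.mem_top) ha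
  · have hcard : #M ≤ 2 ^ finrank (ZMod 2) H := by
      rw [← card_filter_mem_submodule, ← card_filter_add_right_mem M a]
      refine card_le_card fun z hz => ?_
      rw [mem_filter_univ] at hz ⊢
      exact ⟨z + a, hz, a, ha, by rw [add_assoc, ZModModule.add_self, add_zero]⟩
    have hlt : 2 ^ finrank (ZMod 2) V < 2 ^ (finrank (ZMod 2) H + 2) := by
      rw [← card_eq_two_pow_finrank, pow_add]
      omega
    exact Nat.lt_succ_iff.1 ((Nat.pow_lt_pow_iff_right one_lt_two).1 hlt)

end SumFree

section BoseBurton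

variable {V : Type*} [AddCommGroup V] [Module (ZMod 2) V] [Fintype V] [DecidableEq V] {M : Finset V}

theorem card_compl_inter_submodule_add (A : Finset V) {H : Submodule (ZMod 2) V}
    (hdisj : ∀ x ∈ H, x ∉ A) : #{z ∈ Aᶜ | z ∉ H} + 2 ^ finrank (ZMod 2) H = #Aᶜ := by
  rw [← card_filter_mem_submodule, ← card_filter_add_card_filter_not (· ∈ H) (s := Aᶜ), add_comm]
  congr 2
  ext z
  simp only [mem_filter, mem_univ, true_and, mem_compl, iff_and_self]
  exact hdisj z

/-- The translates `z + X` with `z ∉ H` avoid `H`, and one of them avoids `Mᶜ` too. -/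
theorem exists_isGeometryIn_of_card_filter_notMem_lt (h0 : 0 ∉ M) {H X : Submodule (ZMod 2) V}
    (hXH : X ≤ H) (hX : IsGeometryIn X M)
    (hM : 2 ^ finrank (ZMod 2) X * #{z ∈ Mᶜ | z ∉ H} + 2 ^ finrank (ZMod 2) H < Fintype.card V) :
    ∃ Y : Submodule (ZMod 2) V,
      finrank (ZMod 2) Y = finrank (ZMod 2) X + 1 ∧ IsGeometryIn Y M := by
  have hcore : #({z | z ∈ H} : Finset V) < #(cosetCore ({z ∈ Mᶜ | z ∉ H} : Finset V)ᶜ X) := by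
    have h1 := card_compl_cosetCore_le ({z ∈ Mᶜ | z ∉ H} : Finset V)ᶜ X
    have h2 := card_add_card_compl (cosetCore ({z ∈ Mᶜ | z ∉ H} : Finset V)ᶜ X)
    rw [compl_compl] at h1
    rw [card_filter_mem_submodule]
    omega
  obtain ⟨z, hz, hzH⟩ := exists_mem_notMem_of_card_lt_card hcore
  rw [mem_filter_univ] at hzH
  have hzX : z ∈ cosetCore M X := by
    refine mem_cosetCore.2 fun x hx => ?_
    have hzx : z + x ∉ H := fun h => hzH ((H.add_mem_iff_left (hXH hx)).1 h)
    have hzxM := mem_cosetCore.1 hz x hx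
    rw [mem_compl, mem_filter, mem_compl] at hzxM
    tauto
  exact ⟨_, finrank_sup_span_singleton_of_mem_cosetCore h0 hzX, hX.sup_span_singleton hzX⟩

theorem exists_hyperplane_of_forall_not_isGeometryIn (h0 : 0 ∉ M) {j : ℕ}
    (hfree : ∀ X : Submodule (ZMod 2) V, finrank (ZMod 2) X = j + 2 → ¬ IsGeometryIn X M)
    (hM : 4 ^ (j + 2) * #Mᶜ < (2 ^ (j + 3) + 1) * Fintype.card V) :
    ∃ H : Submodule (ZMod 2) V, finrank (ZMod 2) H + 1 = finrank (ZMod 2) V ∧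
      2 ^ (j + 4) * #{z ∈ Mᶜ | z ∉ H} < Fintype.card V := by
  have hpow : 2 ^ (j + 4) * (2 ^ j * #Mᶜ) < (2 ^ (j + 3) + 1) * Fintype.card V := by
    refine lt_of_eq_of_lt ?_ hM
    rw [← mul_assoc, ← pow_add, show 4 = 2 ^ 2 from rfl, ← pow_mul]
    congr 2
    ring
  have hone : 1 ≤ 2 ^ j := Nat.one_le_two_pow
  obtain ⟨X, hXj, hX⟩ := exists_isGeometryIn_of_card_compl_lt h0 j (by
    refine lt_of_mul_lt_mul_left (hpow.trans_le ?_) (Nat.zero_le (2 ^ (j + 4)))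
    exact Nat.mul_le_mul_right _ (by rw [pow_add, pow_add]; omega))
  have hcore : 2 ^ (j + 4) * #(cosetCore M X)ᶜ < (2 ^ (j + 3) + 1) * Fintype.card V :=
    (Nat.mul_le_mul_left _ (hXj ▸ card_compl_cosetCore_le M X)).trans_lt hpow
  have hsplit := card_add_card_compl (cosetCore M X)
  obtain ⟨H, hH, hdisj⟩ := exists_hyperplane_disjoint_of_sumFree
    (fun x hx y hy => hX.add_notMem_cosetCore h0 (hXj.symm ▸ hfree) hx hy) (by
      rw [pow_add, pow_add] at hcore
      nlinarith)
  refine ⟨H, hH, ?_⟩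
  have hle : #{z ∈ Mᶜ | z ∉ H} ≤ #{z ∈ (cosetCore M X)ᶜ | z ∉ H} :=
    card_le_card (filter_subset_filter _ (compl_subset_compl.2 cosetCore_subset))
  have hcard := card_compl_inter_submodule_add (cosetCore M X) hdisj
  have hV : Fintype.card V = 2 * 2 ^ finrank (ZMod 2) H := by
    rw [card_eq_two_pow_finrank, ← hH, pow_succ']
  rw [← hcard, hV, pow_succ _ (j + 3)] at hcore
  rw [hV, pow_succ _ (j + 3)]
  nlinarith [Nat.mul_le_mul_left (2 ^ (j + 3)) hle]

theorem not_isGeometryIn_subtype_of_card_filter_notMem_lt (h0 : 0 ∉ M) {H : Submodule (ZMod 2) V}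
    {X : Submodule (ZMod 2) H}
    (hfree : ∀ Y : Submodule (ZMod 2) V, finrank (ZMod 2) Y = finrank (ZMod 2) X + 1 →
      ¬ IsGeometryIn Y M)
    (hM : 2 ^ finrank (ZMod 2) X * #{z ∈ Mᶜ | z ∉ H} + 2 ^ finrank (ZMod 2) H < Fintype.card V) :
    ¬ IsGeometryIn X (M.subtype (· ∈ H)) := by
  intro hX
  rw [← Submodule.finrank_map_subtype_eq H X] at hfree hM
  obtain ⟨Y, hYX, hY⟩ := exists_isGeometryIn_of_card_filter_notMem_lt h0
    (Submodule.map_subtype_le H X) hX.map_subtype hM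
  exact hfree Y hYX hY

theorem exists_submodule_disjoint_of_forall_not_isGeometryIn (h0 : 0 ∉ M) {j : ℕ}
    (hfree : ∀ X : Submodule (ZMod 2) V, finrank (ZMod 2) X = j + 1 → ¬ IsGeometryIn X M)
    (hM : 4 ^ (j + 1) * #Mᶜ < (2 ^ (j + 2) + 1) * Fintype.card V) :
    ∃ W : Submodule (ZMod 2) V, finrank (ZMod 2) W + j = finrank (ZMod 2) V ∧ ∀ x ∈ W, x ∉ M := by
  induction j generalizing V with
  | zero =>
    refine ⟨⊤, finrank_top _ _, fun x _ hx => ?_⟩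
    have hx' : x ∈ cosetCore M (⊥ : Submodule (ZMod 2) V) := by rwa [cosetCore_bot]
    exact hfree _ (by rw [finrank_sup_span_singleton_of_mem_cosetCore h0 hx', finrank_bot])
      (isGeometryIn_bot.sup_span_singleton hx')
  | succ j ih =>
    obtain ⟨H, hH, hMH⟩ := exists_hyperplane_of_forall_not_isGeometryIn h0 hfree hM
    have hV : Fintype.card V = 2 * Fintype.card H := by
      rw [card_eq_two_pow_finrank, card_eq_two_pow_finrank (V := H), ← hH, pow_succ']
    have hfreeH (X : Submodule (ZMod 2) H) (hXj : finrank (ZMod 2) X = j + 1) :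
        ¬ IsGeometryIn X (M.subtype (· ∈ H)) := by
      refine not_isGeometryIn_subtype_of_card_filter_notMem_lt h0 (hXj ▸ hfree) ?_
      have hpow : 2 ^ (j + 4) = 8 * 2 ^ (j + 1) := by ring
      rw [hpow, mul_assoc] at hMH
      rw [hXj, ← card_eq_two_pow_finrank]
      omega
    obtain ⟨W, hW, hdisj⟩ := ih (V := H) (M := M.subtype (· ∈ H)) (fun h => h0 (mem_subtype.1 h))
      hfreeH (by
        refine lt_of_le_of_lt (Nat.mul_le_mul_left _ (m := #Mᶜ) ?_) ?_
        · refine card_le_card_of_injOn (↑) (fun x hx => ?_) Subtype.val_injective.injOn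
          rw [mem_coe, mem_compl, mem_subtype] at hx
          exact mem_coe.2 (mem_compl.2 hx)
        · rw [hV, pow_succ _ (j + 1), pow_succ _ (j + 2)] at hM
          nlinarith [Fintype.card_pos (α := H)])
    refine ⟨W.map H.subtype, ?_, ?_⟩
    · rw [Submodule.finrank_map_subtype_eq]
      omega
    · rintro _ ⟨x, hx, rfl⟩ hxM
      exact hdisj x hx (mem_subtype.2 hxM)

theorem exists_submodule_disjoint_of_card_compl_lt (h0 : 0 ∉ M) {j : ℕ}
    (hfree : ∀ X : Submodule (ZMod 2) V, finrank (ZMod 2) X = j + 1 → ¬ IsGeometryIn X M)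
    (hM : (#Mᶜ : ℝ) < ((1 / 2) ^ j + (1 / 4) ^ (j + 1)) * Fintype.card V) :
    ∃ W : Submodule (ZMod 2) V,
      finrank (ZMod 2) W + j = finrank (ZMod 2) V ∧ ∀ x ∈ W, x ∉ M := by
  refine exists_submodule_disjoint_of_forall_not_isGeometryIn h0 hfree ?_
  have hM' : (4 : ℝ) ^ (j + 1) * #Mᶜ < (2 ^ (j + 2) + 1) * Fintype.card V := by
    calc (4 : ℝ) ^ (j + 1) * #Mᶜ
        < 4 ^ (j + 1) * (((1 / 2) ^ j + (1 / 4) ^ (j + 1)) * Fintype.card V) := by gcongr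
      _ = ((4 * (1 / 2)) ^ j * 4 + (4 * (1 / 4)) ^ (j + 1)) * Fintype.card V := by
        rw [mul_pow, mul_pow]
        ring
      _ = (2 ^ (j + 2) + 1) * Fintype.card V := by
        norm_num
        ring
  exact_mod_cast hM'

end BoseBurton

section DenseSets

variable {V : Type*} [AddCommGroup V] [Module (ZMod 2) V] [Fintype V]

theorem exists_notMem_card_sq_le (B : Finset V) (W : Submodule (ZMod 2) V)
    (hB : 2 * 2 ^ finrank (ZMod 2) W ≤ #B) :
    ∃ w ∉ W, #B ^ 2 ≤ 2 * Fintype.card V * #{z ∈ B | z + w ∈ B} := by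
  have hpos : 0 < 2 ^ finrank (ZMod 2) W := by positivity
  have hsplit := sum_filter_add_sum_filter_not univ (· ∈ W) fun w => #{z ∈ B | z + w ∈ B}
  have hcard := card_filter_add_card_filter_not (s := (univ : Finset V)) (· ∈ W)
  rw [sum_card_filter_add_mem] at hsplit
  rw [card_filter_mem_submodule, card_univ] at hcard
  have hW : ∑ w with w ∈ W, #{z ∈ B | z + w ∈ B} ≤ 2 ^ finrank (ZMod 2) W * #B := by
    rw [← card_filter_mem_submodule, ← smul_eq_mul]
    exact sum_le_card_nsmul _ _ _ fun w _ => card_filter_le _ _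
  have hout : (univ.filter (· ∉ W)).Nonempty := by
    have := card_le_univ B
    exact card_pos.1 (by omega)
  obtain ⟨w, hw, hle⟩ := exists_le_of_sum_le (f := fun _ => #B ^ 2)
    (g := fun w => 2 * Fintype.card V * #{z ∈ B | z + w ∈ B}) hout (by
      rw [sum_const, smul_eq_mul, ← mul_sum]
      calc #{w | w ∉ W} * #B ^ 2 ≤ Fintype.card V * #B ^ 2 := by
            gcongr
            exact card_le_univ _
        _ ≤ Fintype.card V * (2 * ∑ w with w ∉ W, #{z ∈ B | z + w ∈ B}) := by
            gcongr
            nlinarith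
        _ = 2 * Fintype.card V * ∑ w with w ∉ W, #{z ∈ B | z + w ∈ B} := by ring)
  exact ⟨w, (mem_filter.1 hw).2, hle⟩

theorem exists_card_mul_card_le (Z : Finset V) (D : Submodule (ZMod 2) V) :
    ∃ y : V, #Z * Fintype.card D ≤ Fintype.card V * #{d : D | (d : V) + y ∈ Z} := by
  have hsum : ∑ y : V, #{d : D | (d : V) + y ∈ Z} = Fintype.card D * #Z := by
    simp only [card_filter]
    rw [sum_comm]
    simp only [← card_filter, card_filter_add_left_mem, sum_const, card_univ,
      smul_eq_mul]
  obtain ⟨y, -, hy⟩ := exists_le_of_sum_le (s := (univ : Finset V))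
    (f := fun _ => #Z * Fintype.card D)
    (g := fun y => Fintype.card V * #{d : D | (d : V) + y ∈ Z}) univ_nonempty (by
      rw [sum_const, ← mul_sum, hsum, card_univ, smul_eq_mul, mul_comm #Z])
  exact ⟨y, hy⟩

universe u

theorem exists_finrank_eq_le_card_cosetCore (k : ℕ) {τ : ℝ} (hτ : 0 < τ) :
    ∃ τ' : ℝ, 0 < τ' ∧ ∃ m : ℕ, ∀ (V : Type u) [AddCommGroup V] [Module (ZMod 2) V] [Fintype V],
      m ≤ finrank (ZMod 2) V → ∀ A : Finset V, τ * Fintype.card V ≤ #A →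
      ∃ W : Submodule (ZMod 2) V, finrank (ZMod 2) W = k ∧
        τ' * Fintype.card V ≤ #(cosetCore A W) := by
  induction k with
  | zero =>
    exact ⟨τ, hτ, 0, fun V _ _ _ _ A hA => ⟨⊥, finrank_bot _ _, by rwa [cosetCore_bot]⟩⟩
  | succ k ih =>
    obtain ⟨τ', hτ', m, hm⟩ := ih
    obtain ⟨m', hm'⟩ := pow_unbounded_of_one_lt (2 * 2 ^ k / τ') (one_lt_two : (1 : ℝ) < 2)
    refine ⟨τ' ^ 2 / 2, by positivity, max m m', fun V _ _ _ hV A hA => ?_⟩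
    obtain ⟨W, hWk, hW⟩ := hm V ((le_max_left _ _).trans hV) A hA
    have hlarge : (2 : ℝ) * 2 ^ k ≤ #(cosetCore A W) := by
      refine ((div_lt_iff₀' hτ').1 hm').le.trans (le_trans ?_ hW)
      rw [card_eq_two_pow_finrank, Nat.cast_pow, Nat.cast_ofNat]
      gcongr
      · exact one_le_two
      · exact (le_max_right _ _).trans hV
    obtain ⟨w, hwW, hw⟩ :=
      exists_notMem_card_sq_le (cosetCore A W) W (hWk ▸ by exact_mod_cast hlarge)
    refine ⟨W ⊔ Submodule.span (ZMod 2) {w},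
      by rw [Submodule.finrank_sup_span_singleton hwW, hWk], ?_⟩
    rw [cosetCore_sup, cosetCore_span_singleton]
    have hsq : (τ' * Fintype.card V) ^ 2 ≤
        2 * Fintype.card V * (#{z ∈ cosetCore A W | z + w ∈ cosetCore A W} : ℝ) :=
      (pow_le_pow_left₀ (by positivity) hW 2).trans (by exact_mod_cast hw)
    refine le_of_mul_le_mul_left (le_trans (le_of_eq ?_) hsq) (by positivity : (0 : ℝ) < 2 * _)
    ring

/-- Inside some translate of `D` the set `cosetCore M X` is dense, so it contains a translate
`z + W` with `W ≤ D`, and then `z` can be added to `X`. -/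
theorem exists_isGeometryIn_cosetCore_succ (k : ℕ) {τ : ℝ} (hτ : 0 < τ) :
    ∃ m : ℕ, ∀ (V : Type u) [AddCommGroup V] [Module (ZMod 2) V] [Fintype V] (M : Finset V)
      (X D : Submodule (ZMod 2) V), 0 ∉ M → IsGeometryIn X (cosetCore M D) →
      m ≤ finrank (ZMod 2) D → τ * Fintype.card V ≤ #(cosetCore M X) →
      ∃ Y W : Submodule (ZMod 2) V, finrank (ZMod 2) Y = finrank (ZMod 2) X + 1 ∧
        finrank (ZMod 2) W = k ∧ IsGeometryIn Y (cosetCore M W) := by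
  obtain ⟨τ', hτ', m, hm⟩ := exists_finrank_eq_le_card_cosetCore.{u} k hτ
  refine ⟨m, fun V _ _ _ M X D h0 hX hmD hcore => ?_⟩
  obtain ⟨y, hy⟩ := exists_card_mul_card_le (cosetCore M X) D
  have hV0 : (0 : ℝ) < Fintype.card V := by exact_mod_cast Fintype.card_pos
  have hD0 : (0 : ℝ) < Fintype.card D := by exact_mod_cast Fintype.card_pos
  have hdense : τ * Fintype.card D ≤ #{d : D | (d : V) + y ∈ cosetCore M X} := by
    refine le_of_mul_le_mul_left ?_ hV0
    calc Fintype.card V * (τ * Fintype.card D) = τ * Fintype.card V * Fintype.card D := by ring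
      _ ≤ #(cosetCore M X) * Fintype.card D := by gcongr
      _ ≤ _ := by exact_mod_cast hy
  obtain ⟨W, hWk, hW⟩ := hm D hmD _ hdense
  obtain ⟨d, hd⟩ := card_pos.1 (Nat.cast_pos.1 ((mul_pos hτ' hD0).trans_le hW))
  have hz : (d : V) + y ∈ cosetCore (cosetCore M (W.map D.subtype)) X := by
    rw [← cosetCore_sup, sup_comm, cosetCore_sup, mem_cosetCore]
    rintro _ ⟨w, hw, rfl⟩
    have hdw := mem_cosetCore.1 hd w hw
    rw [mem_filter_univ, Submodule.coe_add] at hdw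
    rwa [add_right_comm]
  have hXW : IsGeometryIn X (cosetCore M (W.map D.subtype)) :=
    hX.mono (cosetCore_subset_cosetCore (Submodule.map_subtype_le D W))
  refine ⟨_, _, ?_, ?_, hXW.sup_span_singleton hz⟩
  · exact finrank_sup_span_singleton_of_mem_cosetCore (fun h => h0 (cosetCore_subset h)) hz
  · rw [Submodule.finrank_map_subtype_eq, hWk]

theorem exists_isGeometryIn_cosetCore (j k : ℕ) :
    ∃ r : ℕ, ∀ (V : Type u) [AddCommGroup V] [Module (ZMod 2) V] [Fintype V] [DecidableEq V]
      (M : Finset V), 0 ∉ M → r ≤ finrank (ZMod 2) V →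
      2 * 2 ^ j * #Mᶜ ≤ 3 * Fintype.card V →
      ∃ X D : Submodule (ZMod 2) V, finrank (ZMod 2) X = j ∧ finrank (ZMod 2) D = k ∧
        IsGeometryIn X (cosetCore M D) := by
  induction j generalizing k with
  | zero =>
    refine ⟨k, fun V _ _ _ _ M _ hk _ => ?_⟩
    rw [← finrank_top (ZMod 2) V] at hk
    obtain ⟨D, -, hD⟩ := exists_le_finrank_eq hk
    exact ⟨⊥, D, finrank_bot _ _, hD, isGeometryIn_bot⟩
  | succ j ih =>
    obtain ⟨m, hm⟩ := exists_isGeometryIn_cosetCore_succ.{u} k (τ := 1 / 4) (by norm_num)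
    obtain ⟨r, hr⟩ := ih m
    refine ⟨r, fun V _ _ _ _ M h0 hrV hM => ?_⟩
    rw [pow_succ] at hM
    obtain ⟨X, D, hXj, hDm, hX⟩ := hr V M h0 hrV (by nlinarith [Nat.zero_le (2 ^ j * #Mᶜ)])
    have hcore : Fintype.card V ≤ 4 * #(cosetCore M X) := by
      have h1 := card_compl_cosetCore_le M X
      have h2 := card_add_card_compl (cosetCore M X)
      rw [hXj] at h1
      nlinarith
    obtain ⟨Y, W, hYj, hWk, hY⟩ := hm V M X D h0 hX hDm.ge (by
      have : (Fintype.card V : ℝ) ≤ 4 * #(cosetCore M X) := by exact_mod_cast hcore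
      linarith)
    exact ⟨Y, W, by rw [hYj, hXj], hWk, hY⟩

end DenseSets

section NearInvariance

variable {V : Type*} [AddCommGroup V] [Module (ZMod 2) V] {M : Finset V}
  {X D : Submodule (ZMod 2) V} {w x : V}

/-- Shear `X` along `w` by a linear functional that is nonzero at `x`. -/
theorem IsGeometryIn.exists_finrank_eq_add_mem [Module.Finite (ZMod 2) V] (h0 : 0 ∉ M)
    (hX : IsGeometryIn X (cosetCore M D)) (hw : w ∈ D) (hx : x ∈ X) (hx0 : x ≠ 0) :
    ∃ Y : Submodule (ZMod 2) V, finrank (ZMod 2) Y = finrank (ZMod 2) X ∧ x + w ∈ Y ∧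
      IsGeometryIn Y (cosetCore M D) := by
  obtain ⟨l, hl⟩ := Module.Projective.exists_dual_ne_zero (ZMod 2) (x := (⟨x, hx⟩ : X))
    fun h => hx0 (congrArg Subtype.val h)
  let shear : X →ₗ[ZMod 2] V := X.subtype + l.smulRight w
  have hshear (u : X) (hu : u ≠ 0) : shear u ∈ cosetCore M D :=
    add_mem_cosetCore (hX u u.2 fun h => hu (Subtype.ext h)) (D.smul_mem _ hw)
  have hinj : Function.Injective shear := (injective_iff_map_eq_zero _).2 fun u hu => by
    by_contra hu0
    exact h0 (cosetCore_subset (hu ▸ hshear u hu0))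
  refine ⟨shear.range, LinearMap.finrank_range_of_inj hinj, ⟨⟨x, hx⟩, ?_⟩, ?_⟩
  · have hone : l ⟨x, hx⟩ = 1 := Fin.eq_one_of_ne_zero _ hl
    simp only [shear, LinearMap.add_apply, Submodule.subtype_apply, LinearMap.smulRight_apply, hone,
      one_smul]
  · rintro _ ⟨u, rfl⟩ hu
    exact hshear u fun h => hu (h ▸ map_zero shear)

theorem card_sdiff_cosetCore_le [Finite V] [DecidableEq V] (D : Submodule (ZMod 2) V) {β : ℝ}
    (hβ : ∀ w ∈ D, (#{z ∈ M | z + w ∉ M} : ℝ) ≤ β) :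
    (#(M \ cosetCore M D) : ℝ) ≤ 2 ^ finrank (ZMod 2) D * β := by
  have := Fintype.ofFinite V
  have hcover : M \ cosetCore M D ⊆
      ({w | w ∈ D} : Finset V).biUnion fun w => {z ∈ M | z + w ∉ M} := by
    intro z hz
    rw [mem_sdiff, mem_cosetCore] at hz
    push Not at hz
    obtain ⟨hzM, w, hw, hzw⟩ := hz
    exact mem_biUnion.2 ⟨w, mem_filter_univ _ |>.2 hw, mem_filter.2 ⟨hzM, hzw⟩⟩
  calc (#(M \ cosetCore M D) : ℝ) ≤ ∑ w with w ∈ D, (#{z ∈ M | z + w ∉ M} : ℝ) := by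
        exact_mod_cast (card_le_card hcover).trans card_biUnion_le
    _ ≤ #{w | w ∈ D} • β :=
        sum_le_card_nsmul _ _ _ fun w hw => hβ w (mem_filter_univ _ |>.1 hw)
    _ = 2 ^ finrank (ZMod 2) D * β := by
        rw [card_filter_mem_submodule, nsmul_eq_mul, Nat.cast_pow, Nat.cast_ofNat]

variable [Fintype V] [DecidableEq V] {s t : ℝ}

theorem card_filter_add_notMem (M : Finset V) (w : V) :
    #{z ∈ M | z + w ∉ M} = #{z ∈ Mᶜ | z + w ∈ M} :=
  card_equiv (Equiv.addRight w) fun z => by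
    simp only [mem_filter, mem_compl, Equiv.coe_addRight, add_assoc, ZModModule.add_self, add_zero,
      and_comm]

theorem card_filter_compl_add_notMem_le (h0 : 0 ∉ M) (hX : IsGeometryIn X (cosetCore M D))
    (ht : ∀ Y : Submodule (ZMod 2) V, finrank (ZMod 2) Y = finrank (ZMod 2) X →
      IsGeometryIn Y (cosetCore M D) → (#(cosetCore M Y) : ℝ) ≤ t)
    (hs : 2 ^ finrank (ZMod 2) X * (#Mᶜ : ℝ) + t ≤ Fintype.card V + s)
    (hw : w ∈ D) (hx : x ∈ X) (hx0 : x ≠ 0) : (#{z ∈ Mᶜ | z + (x + w) ∉ M} : ℝ) ≤ s := by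
  obtain ⟨Y, hYX, hxw, hY⟩ := hX.exists_finrank_eq_add_mem h0 hw hx hx0
  have hxw0 : x + w ≠ 0 := fun h =>
    h0 (cosetCore_subset (h ▸ add_mem_cosetCore (hX x hx hx0) hw))
  have hsub : #{z ∈ Mᶜ | z + (x + w) ∉ M} ≤ #{z ∈ Mᶜ | ∃ y ∈ Y, y ≠ 0 ∧ z + y ∉ M} :=
    card_le_card (monotone_filter_right _ fun z _ hz => ⟨_, hxw, hxw0, hz⟩)
  have hcount := (Nat.add_le_add_right hsub _).trans
    (card_filter_exists_add_notMem_add_card_compl_cosetCore_le M Y)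
  have hcore := card_add_card_compl (cosetCore M Y)
  have hcount' : (#{z ∈ Mᶜ | z + (x + w) ∉ M} : ℝ) + #(cosetCore M Y)ᶜ ≤
      2 ^ finrank (ZMod 2) X * #Mᶜ := by exact_mod_cast hYX ▸ hcount
  have hcore' : (#(cosetCore M Y) : ℝ) + #(cosetCore M Y)ᶜ = Fintype.card V := by
    exact_mod_cast hcore
  linarith [ht Y hYX hY]

/-- If `z ∉ M` and `z + w ∈ M`, then either `z + w ∈ cosetCore M X` or `z + w + x ∉ M` for some
nonzero `x ∈ X`. -/
theorem card_filter_add_notMem_le (h0 : 0 ∉ M) (hX : IsGeometryIn X (cosetCore M D))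
    (ht : ∀ Y : Submodule (ZMod 2) V, finrank (ZMod 2) Y = finrank (ZMod 2) X →
      IsGeometryIn Y (cosetCore M D) → (#(cosetCore M Y) : ℝ) ≤ t)
    (hs : 2 ^ finrank (ZMod 2) X * (#Mᶜ : ℝ) + t ≤ Fintype.card V + s) (hs0 : 0 ≤ s)
    (hw : w ∈ D) : (#{z ∈ M | z + w ∉ M} : ℝ) ≤ t + 2 ^ finrank (ZMod 2) X * s := by
  have hcover : ({z ∈ Mᶜ | z + w ∈ M} : Finset V) ⊆ ({z | z + w ∈ cosetCore M X} : Finset V) ∪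
      ({x | x ∈ X} : Finset V).biUnion fun x => {z ∈ Mᶜ | x ≠ 0 ∧ z + (x + w) ∉ M} := by
    intro z hz
    rw [mem_filter] at hz
    rw [mem_union, mem_filter_univ, mem_cosetCore]
    by_contra! h
    obtain ⟨⟨x, hx, hzx⟩, h⟩ := h
    refine h (mem_biUnion.2 ⟨x, mem_filter_univ _ |>.2 hx, mem_filter.2 ⟨hz.1, ?_, ?_⟩⟩)
    · rintro rfl
      exact hzx (by rw [add_zero]; exact hz.2)
    · rwa [add_comm x, ← add_assoc]
  have hbound (x : V) (hx : x ∈ ({x | x ∈ X} : Finset V)) :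
      (#{z ∈ Mᶜ | x ≠ 0 ∧ z + (x + w) ∉ M} : ℝ) ≤ s := by
    by_cases hx0 : x = 0
    · simpa only [hx0, ne_eq, not_true_eq_false, false_and, filter_false, card_empty,
        Nat.cast_zero] using hs0
    · simpa only [ne_eq, hx0, not_false_eq_true, true_and] using
        card_filter_compl_add_notMem_le h0 hX ht hs hw (mem_filter_univ _ |>.1 hx) hx0
  rw [card_filter_add_notMem]
  calc (#{z ∈ Mᶜ | z + w ∈ M} : ℝ)
      ≤ #{z | z + w ∈ cosetCore M X} +
        ∑ x with x ∈ X, (#{z ∈ Mᶜ | x ≠ 0 ∧ z + (x + w) ∉ M} : ℝ) := by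
        exact_mod_cast (card_le_card hcover).trans
          ((card_union_le _ _).trans (Nat.add_le_add_left card_biUnion_le _))
    _ ≤ t + 2 ^ finrank (ZMod 2) X * s := by
        rw [card_filter_add_right_mem]
        refine add_le_add (ht X rfl hX) ((sum_le_card_nsmul _ _ s hbound).trans_eq ?_)
        rw [card_filter_mem_submodule, nsmul_eq_mul, Nat.cast_pow, Nat.cast_ofNat]

end NearInvariance

section Stability

universe u

theorem exists_isGeometryIn_forall_card_cosetCore_le (j k m : ℕ) {τ : ℝ} (hτ : 0 < τ) :
    ∃ r : ℕ, ∀ (V : Type u) [AddCommGroup V] [Module (ZMod 2) V] [Fintype V] [DecidableEq V]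
      (M : Finset V), 0 ∉ M →
      (∀ X D : Submodule (ZMod 2) V, finrank (ZMod 2) X = j + 1 → finrank (ZMod 2) D = k →
        ¬ IsGeometryIn X (cosetCore M D)) →
      r ≤ finrank (ZMod 2) V → 2 * 2 ^ j * #Mᶜ ≤ 3 * Fintype.card V →
      ∃ X D : Submodule (ZMod 2) V, finrank (ZMod 2) X = j ∧ m ≤ finrank (ZMod 2) D ∧
        IsGeometryIn X (cosetCore M D) ∧
        ∀ Y : Submodule (ZMod 2) V, finrank (ZMod 2) Y = finrank (ZMod 2) X →
          IsGeometryIn Y (cosetCore M D) → (#(cosetCore M Y) : ℝ) ≤ τ * Fintype.card V := by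
  obtain ⟨l, hl⟩ := exists_isGeometryIn_cosetCore_succ.{u} k hτ
  obtain ⟨r, hr⟩ := exists_isGeometryIn_cosetCore.{u} j (max l m)
  refine ⟨r, fun V _ _ _ _ M h0 hfree hrV hM => ?_⟩
  obtain ⟨X, D, hXj, hD, hX⟩ := hr V M h0 hrV hM
  refine ⟨X, D, hXj, (le_max_right l m).trans hD.ge, hX, fun Y hYX hY => ?_⟩
  by_contra! hlt
  obtain ⟨Z, W, hZ, hW, hZW⟩ := hl V M Y D h0 hY ((le_max_left l m).trans hD.ge) hlt.le
  exact hfree Z W (by rw [hZ, hYX, hXj]) hW hZW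

theorem exists_card_sdiff_cosetCore_le (j k : ℕ) {μ : ℝ} (hμ : 0 < μ) :
    ∃ δ : ℝ, 0 < δ ∧ ∃ r : ℕ, ∀ (V : Type u) [AddCommGroup V] [Module (ZMod 2) V] [Fintype V]
      [DecidableEq V] (M : Finset V), 0 ∉ M →
      (∀ X D : Submodule (ZMod 2) V, finrank (ZMod 2) X = j + 1 → finrank (ZMod 2) D = k →
        ¬ IsGeometryIn X (cosetCore M D)) →
      r ≤ finrank (ZMod 2) V → (#Mᶜ : ℝ) ≤ ((1 / 2) ^ j + δ) * Fintype.card V →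
      ∃ D : Submodule (ZMod 2) V, finrank (ZMod 2) D = k ∧
        (#(M \ cosetCore M D) : ℝ) ≤ μ * Fintype.card V := by
  set τ : ℝ := μ / (4 * 2 ^ k * 2 ^ j)
  set δ : ℝ := min (1 / (2 * 2 ^ j)) (μ / (2 * 2 ^ k * 2 ^ j * 2 ^ j))
  have hτ0 : 0 < τ := by positivity
  have hδ0 : 0 < δ := by positivity
  obtain ⟨r, hr⟩ := exists_isGeometryIn_forall_card_cosetCore_le.{u} j k k hτ0
  refine ⟨δ, hδ0, r, fun V _ _ _ _ M h0 hfree hrV hM => ?_⟩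
  have hcompl : 2 ^ j * (#Mᶜ : ℝ) ≤ (1 + 2 ^ j * δ) * Fintype.card V := by
    calc 2 ^ j * (#Mᶜ : ℝ) ≤ 2 ^ j * (((1 / 2) ^ j + δ) * Fintype.card V) := by gcongr
      _ = ((2 * (1 / 2)) ^ j + 2 ^ j * δ) * Fintype.card V := by rw [mul_pow]; ring
      _ = (1 + 2 ^ j * δ) * Fintype.card V := by norm_num
  have hδ1 : δ * (2 * 2 ^ j) ≤ 1 := (le_div_iff₀ (by positivity)).1 (min_le_left _ _)
  have hδ2 : δ * (2 * 2 ^ k * 2 ^ j * 2 ^ j) ≤ μ :=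
    (le_div_iff₀ (by positivity)).1 (min_le_right _ _)
  have hτ1 : τ * (4 * 2 ^ k * 2 ^ j) = μ := div_mul_cancel₀ _ (by positivity)
  have hτ2 : τ * 2 ^ k ≤ τ * 2 ^ k * 2 ^ j :=
    le_mul_of_one_le_right (by positivity) (one_le_pow₀ one_le_two)
  obtain ⟨X, D, hXj, hDk, hX, hcore⟩ := hr V M h0 hfree hrV (by
    have : 2 * 2 ^ j * (#Mᶜ : ℝ) ≤ 3 * Fintype.card V := by nlinarith
    exact_mod_cast this)
  obtain ⟨D₀, hD₀, hD₀k⟩ := exists_le_finrank_eq hDk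
  have hinv (w : V) (hw : w ∈ D₀) := card_filter_add_notMem_le
    (s := (2 ^ j * δ + τ) * Fintype.card V) h0 hX hcore
    (by rw [hXj]; linarith) (by positivity) (hD₀ hw)
  refine ⟨D₀, hD₀k, (card_sdiff_cosetCore_le D₀ hinv).trans ?_⟩
  rw [hD₀k, hXj]
  calc 2 ^ k * (τ * Fintype.card V + 2 ^ j * ((2 ^ j * δ + τ) * Fintype.card V))
      = (τ * 2 ^ k + δ * (2 ^ k * 2 ^ j * 2 ^ j) + τ * 2 ^ k * 2 ^ j) * Fintype.card V := by ring
    _ ≤ μ * Fintype.card V := by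
      gcongr
      linarith

theorem card_symmDiff_compl_submodule_add_le {V : Type*} [AddCommGroup V] [Module (ZMod 2) V]
    [Fintype V] [DecidableEq V] (M : Finset V) {A : Finset V} {W : Submodule (ZMod 2) V}
    (hdisj : ∀ x ∈ W, x ∉ A) :
    #(symmDiff M ({x | x ∉ W} : Finset V)) + 2 ^ finrank (ZMod 2) W ≤ #Mᶜ + 2 * #(M \ A) := by
  have hin : #{x ∈ M | x ∈ W} ≤ #(M \ A) := card_le_card fun x hx => by
    rw [mem_filter] at hx
    exact mem_sdiff.2 ⟨hx.1, hdisj x hx.2⟩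
  have hsymm : symmDiff M ({x | x ∉ W} : Finset V) =
      ({x ∈ M | x ∈ W} : Finset V) ∪ {x ∈ Mᶜ | x ∉ W} := by
    ext x
    simp only [mem_symmDiff, mem_union, mem_filter, mem_univ, true_and, mem_compl, not_not]
    tauto
  have hW : #{x ∈ M | x ∈ W} + #{x ∈ Mᶜ | x ∈ W} = 2 ^ finrank (ZMod 2) W := by
    rw [← card_filter_mem_submodule, ← card_union_of_disjoint (disjoint_compl_right.mono
      (filter_subset _ _) (filter_subset _ _)), ← filter_union, union_compl]
  have hcompl := card_filter_add_card_filter_not (s := Mᶜ) (· ∈ W)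
  have hle := card_union_le ({x ∈ M | x ∈ W} : Finset V) {x ∈ Mᶜ | x ∉ W}
  rw [hsymm]
  omega

theorem exists_card_symmDiff_lt (j k : ℕ) {ε : ℝ} (hε : 0 < ε) :
    ∃ δ : ℝ, 0 < δ ∧ ∃ r : ℕ, ∀ (V : Type u) [AddCommGroup V] [Module (ZMod 2) V] [Fintype V]
      [DecidableEq V] (M : Finset V), 0 ∉ M →
      (∀ X D : Submodule (ZMod 2) V, finrank (ZMod 2) X = j + 1 → finrank (ZMod 2) D = k →
        ¬ IsGeometryIn X (cosetCore M D)) →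
      r ≤ finrank (ZMod 2) V → (#Mᶜ : ℝ) ≤ ((1 / 2) ^ j + δ) * Fintype.card V →
      ∃ W : Submodule (ZMod 2) V, finrank (ZMod 2) W + j = finrank (ZMod 2) V ∧
        (#(symmDiff M ({x | x ∉ W} : Finset V)) : ℝ) < ε * Fintype.card V := by
  set μ : ℝ := min (ε / 4) ((1 / 4) ^ (j + 2))
  have hμ0 : 0 < μ := by positivity
  obtain ⟨δ, hδ, r, hr⟩ := exists_card_sdiff_cosetCore_le.{u} j k hμ0
  refine ⟨min δ μ, lt_min hδ hμ0, r, fun V _ _ _ _ M h0 hfree hrV hM => ?_⟩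
  have hV : (0 : ℝ) < Fintype.card V := by exact_mod_cast Fintype.card_pos
  obtain ⟨D, hD, hMD⟩ := hr V M h0 hfree hrV <| hM.trans <| by
    gcongr
    exact min_le_left _ _
  have hMμ : (#Mᶜ : ℝ) ≤ ((1 / 2) ^ j + μ) * Fintype.card V := hM.trans <| by
    gcongr
    exact min_le_right _ _
  have hcore : (#(cosetCore M D)ᶜ : ℝ) ≤ #Mᶜ + #(M \ cosetCore M D) := by
    have : (cosetCore M D)ᶜ ⊆ Mᶜ ∪ (M \ cosetCore M D) := fun x hx => by
      rw [mem_union, mem_compl, mem_sdiff, ← mem_compl (s := cosetCore M D)]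
      tauto
    exact_mod_cast (card_le_card this).trans (card_union_le _ _)
  have hμ4 : μ ≤ (1 / 4) ^ (j + 1) * (1 / 4) := (min_le_right _ _).trans_eq (pow_succ _ _)
  obtain ⟨W, hW, hdisj⟩ := exists_submodule_disjoint_of_card_compl_lt
    (fun h => h0 (cosetCore_subset h)) (fun X hX => hfree X D hX hD) (j := j) <| by
      calc (#(cosetCore M D)ᶜ : ℝ) ≤ ((1 / 2) ^ j + 2 * μ) * Fintype.card V := by linarith
        _ < ((1 / 2) ^ j + (1 / 4) ^ (j + 1)) * Fintype.card V := by
          gcongr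
          linarith
  refine ⟨W, hW, ?_⟩
  have hWcard : (2 : ℝ) ^ finrank (ZMod 2) W = (1 / 2) ^ j * Fintype.card V := by
    rw [card_eq_two_pow_finrank, ← hW, Nat.cast_pow, Nat.cast_ofNat, pow_add, one_div, inv_pow]
    field_simp
  have hcount : (#(symmDiff M ({x | x ∉ W} : Finset V)) : ℝ) + 2 ^ finrank (ZMod 2) W ≤
      #Mᶜ + 2 * #(M \ cosetCore M D) := by
    exact_mod_cast card_symmDiff_compl_submodule_add_le M hdisj
  have hμε : μ ≤ ε / 4 := min_le_left _ _
  nlinarith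

end Stability

section Restriction

variable {E F V : Type*} [AddCommGroup E] [Module (ZMod 2) E] [AddCommGroup F] [Module (ZMod 2) F]
  [AddCommGroup V] [Module (ZMod 2) V]

theorem HasRestriction.of_preimage {N : Set E} {M : Set V} {f : F →ₗ[ZMod 2] V}
    (hf : Function.Injective f) (h : HasRestriction N (f ⁻¹' M)) : HasRestriction N M := by
  obtain ⟨ψ, hψ, hN⟩ := h
  refine ⟨f ∘ₗ ψ, hf.comp hψ, ?_⟩
  rintro _ ⟨x, hx, rfl⟩
  exact hN ⟨x, hx, rfl⟩

theorem HasRestriction.of_isGeometryIn_cosetCore [Module.Finite (ZMod 2) E]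
    [Module.Finite (ZMod 2) F] [Module.Finite (ZMod 2) V] {N : Set E} {M : Finset V}
    {X D : Submodule (ZMod 2) V} {φ : E →ₗ[ZMod 2] F} (hφ : ∀ x ∈ N, φ x ≠ 0) (h0 : 0 ∉ M)
    (hXF : finrank (ZMod 2) X = finrank (ZMod 2) F) (hDE : finrank (ZMod 2) D = finrank (ZMod 2) E)
    (hX : IsGeometryIn X (cosetCore M D)) : HasRestriction N (M : Set V) := by
  let eX : F ≃ₗ[ZMod 2] X := LinearEquiv.ofFinrankEq _ _ hXF.symm
  let eD : E ≃ₗ[ZMod 2] D := LinearEquiv.ofFinrankEq _ _ hDE.symm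
  let ψ : E →ₗ[ZMod 2] V := X.subtype ∘ₗ eX.toLinearMap ∘ₗ φ + D.subtype ∘ₗ eD.toLinearMap
  have hψ (v : E) : ψ v = (eX (φ v) : V) + (eD v : V) := rfl
  have hψM (v : E) (hv : φ v ≠ 0) : ψ v ∈ M := by
    rw [hψ]
    refine mem_cosetCore.1 (hX _ (eX (φ v)).2 fun h => hv ?_) _ (eD v).2
    exact eX.map_eq_zero_iff.1 (Subtype.ext h)
  refine ⟨ψ, (injective_iff_map_eq_zero _).2 fun v hv => ?_, ?_⟩
  · have hφv : φ v = 0 := not_imp_comm.1 (hψM v) (hv ▸ h0)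
    rw [hψ, hφv, map_zero, Submodule.coe_zero, zero_add] at hv
    exact eD.map_eq_zero_iff.1 (Subtype.ext hv)
  · rintro _ ⟨x, hx, rfl⟩
    exact hψM x (hφ x hx)

theorem exists_linearMap_critNum {k : ℕ} {N : Set (Fin k → ZMod 2)} (hN0 : 0 ∉ N) :
    ∃ φ : (Fin k → ZMod 2) →ₗ[ZMod 2] (Fin (critNum N) → ZMod 2), ∀ x ∈ N, φ x ≠ 0 :=
  Nat.sInf_mem (s := {c | ∃ φ : (Fin k → ZMod 2) →ₗ[ZMod 2] (Fin c → ZMod 2), ∀ x ∈ N, φ x ≠ 0})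
    ⟨k, LinearMap.id, fun _ hx hx0 => hN0 (hx0 ▸ hx)⟩

theorem critNum_pos {k : ℕ} {N : Set (Fin k → ZMod 2)} (hN0 : 0 ∉ N) (hN : N.Nonempty) :
    0 < critNum N := by
  obtain ⟨φ, hφ⟩ := exists_linearMap_critNum hN0
  obtain ⟨x, hx⟩ := hN
  exact Nat.pos_of_ne_zero fun hc => hφ x hx (funext fun i => (hc ▸ i).elim0)

end Restriction

section Rank

universe u

theorem exists_ncard_symmDiff_lt {E F : Type*} [AddCommGroup E] [Module (ZMod 2) E]
    [Module.Finite (ZMod 2) E] [AddCommGroup F] [Module (ZMod 2) F] [Module.Finite (ZMod 2) F]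
    {j : ℕ} (hF : finrank (ZMod 2) F = j + 1) {N : Set E} {φ : E →ₗ[ZMod 2] F}
    (hφ : ∀ x ∈ N, φ x ≠ 0) {ε : ℝ} (hε : 0 < ε) :
    ∃ δ : ℝ, 0 < δ ∧ ∃ r : ℕ, ∀ (V : Type u) [AddCommGroup V] [Module (ZMod 2) V] [Finite V]
      (U : Submodule (ZMod 2) V) (M : Set V), M ⊆ U → 0 ∉ M → ¬ HasRestriction N M →
      r ≤ finrank (ZMod 2) U →
      (1 - (1 / 2) ^ j - δ) * 2 ^ finrank (ZMod 2) U ≤ (M.ncard : ℝ) →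
      ∃ W ≤ U, finrank (ZMod 2) W + j = finrank (ZMod 2) U ∧
        ((symmDiff M {x | x ∈ U ∧ x ∉ W}).ncard : ℝ) < ε * 2 ^ finrank (ZMod 2) U := by
  obtain ⟨δ, hδ, r, hr⟩ := exists_card_symmDiff_lt.{u} j (finrank (ZMod 2) E) hε
  refine ⟨δ, hδ, r, fun V _ _ _ U M hMU h0 hfree hrU hM => ?_⟩
  have := Fintype.ofFinite V
  have hU : (Fintype.card U : ℝ) = 2 ^ finrank (ZMod 2) U := by
    exact_mod_cast card_eq_two_pow_finrank (V := U)
  have hpre {S : Set V} (hS : S ⊆ U) : #((↑) ⁻¹' S : Set U).toFinset = S.ncard := by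
    rw [← Set.ncard_eq_toFinset_card']
    exact Set.ncard_preimage_of_injective_subset_range Subtype.val_injective
      (Subtype.range_coe.symm ▸ hS)
  let MU : Finset U := ((↑) ⁻¹' M : Set U).toFinset
  have h0U : 0 ∉ MU := by rwa [Set.mem_toFinset]
  have hfreeU : ¬ HasRestriction N (MU : Set U) := by
    rw [Set.coe_toFinset]
    exact fun h => hfree (.of_preimage U.injective_subtype h)
  have hcompl : (#MUᶜ : ℝ) ≤ ((1 / 2) ^ j + δ) * Fintype.card U := by
    have hsplit : (#MU : ℝ) + #MUᶜ = Fintype.card U := by exact_mod_cast card_add_card_compl MU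
    rw [← hpre hMU, ← hU] at hM
    linarith
  obtain ⟨W, hW, hlt⟩ := hr U MU h0U (fun X D hX hD hXD =>
    hfreeU (.of_isGeometryIn_cosetCore hφ h0U (hX.trans hF.symm) hD hXD)) hrU hcompl
  refine ⟨W.map U.subtype, Submodule.map_subtype_le U W, ?_, ?_⟩
  · rwa [Submodule.finrank_map_subtype_eq]
  · rw [← hU, ← hpre fun x hx => hx.elim (fun h => hMU h.1) fun h => h.1.1]
    convert hlt using 3
    ext v
    simp [MU, mem_symmDiff]

end Rank

theorem erdos_stone_stability_rank_general {k : ℕ} (N : Set (Fin k → ZMod 2))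
    (hN0 : 0 ∉ N) (hNne : N.Nonempty) {ε : ℝ} (hε : 0 < ε) :
    ∃ δ : ℝ, 0 < δ ∧ ∃ r₀ : ℕ, ∀ n : ℕ, ∀ M : Set (Fin n → ZMod 2),
      0 ∉ M → ¬ HasRestriction N M → r₀ ≤ rankM M →
      (1 - 2 ^ (1 - (critNum N : ℤ)) - δ) * 2 ^ rankM M ≤ (M.ncard : ℝ) →
      ∃ U W : Submodule (ZMod 2) (Fin n → ZMod 2),
        W ≤ U ∧ M ⊆ (U : Set (Fin n → ZMod 2)) ∧
        Module.finrank (ZMod 2) U = rankM M ∧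
        Module.finrank (ZMod 2) W = rankM M - critNum N + 1 ∧
        ((symmDiff M {x : Fin n → ZMod 2 | x ∈ U ∧ x ≠ 0 ∧ x ∉ W}).ncard : ℝ)
          < ε * 2 ^ rankM M := by
  obtain ⟨φ, hφ⟩ := exists_linearMap_critNum hN0
  obtain ⟨j, hj⟩ := Nat.exists_eq_add_one.2 (critNum_pos hN0 hNne)
  obtain ⟨δ, hδ, r, hr⟩ := exists_ncard_symmDiff_lt (by rw [finrank_fin_fun, hj]) hφ hε
  refine ⟨δ, hδ, max r (critNum N), fun n M h0 hfree hrM hM => ?_⟩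
  have hpow : (2 : ℝ) ^ (1 - (critNum N : ℤ)) = (1 / 2) ^ j := by
    rw [hj, Nat.cast_add_one, sub_add_cancel_right, zpow_neg, zpow_natCast, one_div, inv_pow]
  obtain ⟨W, hWU, hW, hlt⟩ := hr _ (Submodule.span (ZMod 2) M) M Submodule.subset_span h0 hfree
    ((le_max_left _ _).trans hrM) (hpow ▸ hM)
  refine ⟨_, W, hWU, Submodule.subset_span, rfl, ?_, ?_⟩
  · have := (le_max_right _ _).trans hrM
    rw [rankM] at this ⊢
    omega
  · have hW0 (x : Fin n → ZMod 2) (hx : x ∉ W) : x ≠ 0 := fun h => hx (h ▸ W.zero_mem)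
    simpa only [and_iff_right_of_imp (hW0 _), rankM] using hlt

/-- Rank version of stability for the matroidal Erdős–Stone theorem. -/
theorem erdos_stone_stability_rank {k : ℕ} (N : Set (Fin k → ZMod 2))
    (hN0 : 0 ∉ N) (hNne : N.Nonempty) (hχ : 2 ≤ critNum N)
    {ε : ℝ} (hε : 0 < ε) :
    ∃ δ : ℝ, 0 < δ ∧ ∃ r₀ : ℕ, ∀ n : ℕ, ∀ M : Set (Fin n → ZMod 2),
      0 ∉ M → ¬ HasRestriction N M → r₀ ≤ rankM M →
      (1 - 2 ^ (1 - (critNum N : ℤ)) - δ) * 2 ^ rankM M ≤ (M.ncard : ℝ) →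
      ∃ U W : Submodule (ZMod 2) (Fin n → ZMod 2),
        W ≤ U ∧ M ⊆ (U : Set (Fin n → ZMod 2)) ∧
        Module.finrank (ZMod 2) U = rankM M ∧
        Module.finrank (ZMod 2) W = rankM M - critNum N + 1 ∧
        ((symmDiff M {x : Fin n → ZMod 2 | x ∈ U ∧ x ≠ 0 ∧ x ∉ W}).ncard : ℝ)
          < ε * 2 ^ rankM M :=
  erdos_stone_stability_rank_general N hN0 hNne hε
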